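/- Fix k > 0 with k ≠ 1, and let ℍ = {ζ ∈ ℂ : Im ζ > 0}. Define f_k(ζ) = (Re ζ)/k + i·k·Im ζ and τ_k(ζ) = ζ/k. Then f_k and τ_k are homeomorphisms of ℍ onto ℍ; τ_k is holomorphic; both extend continuously to the closure of ℍ in ℂ and the extensions agree on the boundary ℝ (both send ξ ∈ ℝ to ξ/k); yet f_k(ζ) ≠ τ_k(ζ) for every ζ ∈ ℍ, so f_k ≠ τ_k. -/

import Mathlib

open Complex

/-- The open upper half-plane in `ℂ`. -/
def UHP : Set ℂ := {ζ : ℂ | 0 < ζ.im}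

/-- The map `f_k(ζ) = (Re ζ)/k + i k Im ζ`. -/
noncomputable def fmap (k : ℝ) (ζ : ℂ) : ℂ :=
  ((ζ.re / k : ℝ) : ℂ) + Complex.I * ((k * ζ.im : ℝ) : ℂ)

/-- The map `τ_k(ζ) = ζ/k`. -/
noncomputable def tmap (k : ℝ) (ζ : ℂ) : ℂ := ζ / (k : ℂ)

/-- Example A of the paper, non-uniqueness phenomenon: for `k > 0`, `k ≠ 1`, the maps
`f_k(ζ) = (Re ζ)/k + i k Im ζ` and `τ_k(ζ) = ζ/k` are homeomorphisms of the upper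
half-plane onto itself (continuous bijections with continuous inverses), `τ_k` is
holomorphic, both extend continuously to the closed half-plane and the extensions agree on
the boundary `ℝ` (sending `ξ` to `ξ/k`), yet `f_k(ζ) ≠ τ_k(ζ)` for every `ζ ∈ ℍ`. -/
theorem example_A_nonuniqueness (k : ℝ) (hk0 : 0 < k) (hk1 : k ≠ 1) :
    Set.BijOn (fmap k) UHP UHP ∧ Set.BijOn (tmap k) UHP UHP ∧
    ContinuousOn (fmap k) (closure UHP) ∧ ContinuousOn (tmap k) (closure UHP) ∧
    (∃ fi : ℂ → ℂ, ContinuousOn fi UHP ∧ Set.InvOn fi (fmap k) UHP UHP) ∧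
    (∃ ti : ℂ → ℂ, ContinuousOn ti UHP ∧ Set.InvOn ti (tmap k) UHP UHP) ∧
    DifferentiableOn ℂ (tmap k) UHP ∧
    (∀ ξ : ℝ, fmap k (ξ : ℂ) = ((ξ / k : ℝ) : ℂ) ∧ tmap k (ξ : ℂ) = ((ξ / k : ℝ) : ℂ)) ∧
    (∀ ζ ∈ UHP, fmap k ζ ≠ tmap k ζ) := by
  have hk : k ≠ 0 := hk0.ne'
  have fre : ∀ (c : ℝ) (z : ℂ), (fmap c z).re = z.re / c := by
    intro c z; simp [fmap, -ofReal_div, -ofReal_mul]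
  have fim : ∀ (c : ℝ) (z : ℂ), (fmap c z).im = c * z.im := by
    intro c z; simp [fmap, -ofReal_div, -ofReal_mul]
  have tre : ∀ (c : ℝ) (z : ℂ), (tmap c z).re = z.re / c := by
    intro c z; simp [tmap]
  have tim : ∀ (c : ℝ) (z : ℂ), (tmap c z).im = z.im / c := by
    intro c z; simp [tmap]
  have fcont : ∀ c : ℝ, Continuous (fmap c) := by
    intro c; unfold fmap; fun_prop
  have tcont : ∀ c : ℝ, Continuous (tmap c) := by
    intro c; unfold tmap; fun_prop
  have fmaps : ∀ c : ℝ, 0 < c → Set.MapsTo (fmap c) UHP UHP := by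
    intro c hc z hz
    change 0 < (fmap c z).im
    rw [fim]; exact mul_pos hc hz
  have tmaps : ∀ c : ℝ, 0 < c → Set.MapsTo (tmap c) UHP UHP := by
    intro c hc z hz
    change 0 < (tmap c z).im
    rw [tim]; exact div_pos hz hc
  have finv : Set.InvOn (fmap k⁻¹) (fmap k) UHP UHP := by
    constructor <;> intro z _ <;> apply Complex.ext <;> simp only [fre, fim] <;> field_simp
  have tinv : Set.InvOn (tmap k⁻¹) (tmap k) UHP UHP := by
    constructor <;> intro z _ <;> apply Complex.ext <;> simp only [tre, tim] <;> field_simp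
  have hki : 0 < k⁻¹ := inv_pos.mpr hk0
  refine ⟨finv.bijOn (fmaps k hk0) (fmaps _ hki), tinv.bijOn (tmaps k hk0) (tmaps _ hki),
    (fcont k).continuousOn, (tcont k).continuousOn,
    ⟨_, (fcont _).continuousOn, finv⟩, ⟨_, (tcont _).continuousOn, tinv⟩, ?_, ?_, ?_⟩
  · unfold tmap; fun_prop
  · intro ξ
    constructor <;> simp [fmap, tmap]
  · intro z hz h
    have hz' : 0 < z.im := hz
    have h2 := congrArg Complex.im h
    rw [fim, tim, eq_div_iff hk] at h2
    have h3 : (k - 1) * ((k + 1) * z.im) = 0 := by linarith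
    rcases mul_eq_zero.mp h3 with h4 | h4
    · exact hk1 (by linarith)
    · have : 0 < (k + 1) * z.im := by positivity
      linarith
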